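/- Let the group G be given by a presentation ⟨x₁,…,x_n | u₁^{m₁},…,u_r^{m_r}⟩, with canonical surjection φ: F_n → G. Suppose H is a normal subgroup of G of finite index N, and that for each j = 1,…,r, φ(u_j)^k ∉ H for k = 1,…,m_j − 1. Then the rank of the abelianisation of H (the torsion-free rank of H/[H,H], i.e. its first Betti number) is at least 1 + N·(n − 1 − Σ_{j=1}^{r} 1/m_j). -/

import Mathlib

/-!
The bound comes from counting dimensions of `Hom(H, ℚ)` on the Cayley graph of `Q = G ⧸ H` with
respect to the images of the free generators. This graph has `N = |Q|` vertices and `N * n`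
edges. Summing a weight `w` on the edges along paths gives a crossed homomorphism `pathSum`
from the free group to `Q → ℚ`. It is built from the action `skew` on `Q × ℚ`, so that a weight
whose sums vanish on every relator path gives an action factoring through `G`, hence a
homomorphism `H → ℚ`.

The relator `u_j ^ m_j` labels a closed path at each vertex. Its weight does not change when the
base point moves along an orbit of `u_j` (`pathSum_zpowers`), and each orbit has exactly `m_j`
elements since `u_j` has order `m_j` in `Q`. The relators therefore impose at most
`∑ j, N / m_j` linear conditions. A weight that gives the zero homomorphism has a potential on the
vertices (`mem_range_coboundary`), and such weights form a space of dimension at most `N - 1`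
(`finrank_coboundary`). What remains is a space of homomorphisms `H → ℚ` of dimension at least
`N * n - ∑ j, N / m_j - (N - 1)`. Since `H` is finitely generated, evaluating these homomorphisms
maps `H` onto a lattice whose rank is at least this dimension (`finrank_le_firstBetti`).
-/


open scoped Classical ENNReal

namespace ResDef

variable {G : Type*} [Group G]

/-- The order of the image of `x` in `G ⧸ H`: the least positive `j` with `x ^ j ∈ H`,
or `0` if there is no such `j`. -/
noncomputable def orderIn (H : Subgroup G) (x : G) : ℕ :=
  sInf {j : ℕ | 0 < j ∧ x ^ j ∈ H}

/-- The finite residual: the intersection of all finite index subgroups. -/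
def finiteResidual (G : Type*) [Group G] : Subgroup G :=
  ⨅ (H : Subgroup G) (_ : H.index ≠ 0), H

/-- An element of a free group is not a proper power. -/
def NotProperPower {α : Type*} (u : FreeGroup α) : Prop :=
  ∀ (v : FreeGroup α) (k : ℕ), u = v ^ k → k = 1

/-- `G` admits a finite presentation. -/
def FinitelyPresentedGroup (G : Type*) [Group G] : Prop :=
  ∃ (n : ℕ) (R : Finset (FreeGroup (Fin n))) (φ : FreeGroup (Fin n) →* G),
    Function.Surjective φ ∧ φ.ker = Subgroup.normalClosure (R : Set (FreeGroup (Fin n)))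

/-- The deficiency of a finitely presented group. -/
noncomputable def deficiency (G : Type*) [Group G] : ℝ :=
  sSup {x : ℝ | ∃ (n : ℕ) (R : Finset (FreeGroup (Fin n))) (φ : FreeGroup (Fin n) →* G),
    Function.Surjective φ ∧ φ.ker = Subgroup.normalClosure (R : Set (FreeGroup (Fin n))) ∧
    x = (n : ℝ) - (R.card : ℝ)}

/-- The residual deficiency of a finitely presented group. -/
noncomputable def rdef (G : Type*) [Group G] : ℝ :=
  sSup {x : ℝ | ∃ (n s : ℕ) (u : Fin s → FreeGroup (Fin n)) (m : Fin s → ℕ)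
    (φ : FreeGroup (Fin n) →* G),
    (∀ i, 1 ≤ m i) ∧ (∀ i, NotProperPower (u i)) ∧ Function.Surjective φ ∧
    φ.ker = Subgroup.normalClosure (Set.range fun i => u i ^ m i) ∧
    x = (n : ℝ) - ∑ i, ((orderIn (finiteResidual G) (φ (u i)) : ℝ))⁻¹}

/-- The deficiency gradient. -/
noncomputable def DG (G : Type*) [Group G] : ℝ :=
  sSup {x : ℝ | ∃ H : Subgroup G, H.index ≠ 0 ∧
    x = (deficiency H - 1) / (H.index : ℝ)}

/-- `ν_p(r)`: the largest `k` such that `r = s ^ (p ^ k)` for some `s`. -/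
noncomputable def nuP (p : ℕ) {α : Type*} (r : FreeGroup α) : ℕ :=
  sSup {k : ℕ | ∃ s : FreeGroup α, r = s ^ (p ^ k)}

/-- The `p`-deficiency of a group. -/
noncomputable def defP (p : ℕ) (G : Type*) [Group G] : ℝ :=
  sSup {x : ℝ | ∃ (n : ℕ) (R : Set (FreeGroup (Fin n))) (φ : FreeGroup (Fin n) →* G),
    Function.Surjective φ ∧ φ.ker = Subgroup.normalClosure R ∧
    Summable (fun r : R => ((p : ℝ) ^ (nuP p r.1))⁻¹) ∧
    x = (n : ℝ) - ∑' r : R, ((p : ℝ) ^ (nuP p r.1))⁻¹}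

/-- The `p`-deficiency gradient. -/
noncomputable def DGp (p : ℕ) (G : Type*) [Group G] : ℝ :=
  sSup {x : ℝ | ∃ H : Subgroup G, H.Normal ∧ H.index ≠ 0 ∧
    x = (defP p H - 1) / (H.index : ℝ)}

/-- The rank (minimal number of generators) of a group. -/
noncomputable def grpRank (G : Type*) [Group G] : ℕ :=
  sInf {n : ℕ | ∃ S : Finset G, S.card = n ∧ Subgroup.closure (S : Set G) = ⊤}

/-- The rank gradient. -/
noncomputable def RG (G : Type*) [Group G] : ℝ :=
  sInf {x : ℝ | ∃ H : Subgroup G, H.index ≠ 0 ∧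
    x = ((grpRank H : ℝ) - 1) / (H.index : ℝ)}

/-- The `p`-rank: the largest `n` such that `G` surjects onto `(C_p)^n`. -/
noncomputable def pRank (p : ℕ) (G : Type*) [Group G] : ℕ :=
  sSup {n : ℕ | ∃ f : G →* (Fin n → Multiplicative (ZMod p)), Function.Surjective f}

/-- The `p`-rank gradient. -/
noncomputable def RGp (p : ℕ) (G : Type*) [Group G] : ℝ :=
  sInf {x : ℝ | ∃ H : Subgroup G, H.Normal ∧ H.index ≠ 0 ∧
    x = ((pRank p H : ℝ) - 1) / (H.index : ℝ)}

/-- `G` is large: some finite index subgroup surjects onto a free group of rank 2. -/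
def Large (G : Type*) [Group G] : Prop :=
  ∃ H : Subgroup G, H.index ≠ 0 ∧ ∃ f : H →* FreeGroup (Fin 2), Function.Surjective f

/-- The first Betti number: the largest `n` such that `G` surjects onto `ℤ^n`. -/
noncomputable def firstBetti (G : Type*) [Group G] : ℕ :=
  sSup {n : ℕ | ∃ f : G →* Multiplicative (Fin n → ℤ), Function.Surjective f}

/-- The order of the image of `x` in `G ⧸ H`, as an extended natural number. -/
noncomputable def orderInE (H : Subgroup G) (x : G) : ℕ∞ :=
  if orderIn H x = 0 then ⊤ else (orderIn H x : ℕ∞)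

/-- `ν(g; G, K)` from the paper, valued in `ℕ∞`. -/
noncomputable def nu (K : Subgroup G) (g : G) : ℕ∞ :=
  if g ∈ K then
    sSup ((fun a : G => orderInE K a) '' {a : G | ∃ n : ℤ, a ^ n = g})
  else
    sSup ((fun q : G × ℤ => (q.2.natAbs : ℕ∞)) '' {q : G × ℤ | q.2 ≠ 0 ∧ q.1 ^ q.2 = g})

/-- The relative size `ν(g;G,K)⁻¹` of an element (`0` if `ν` is infinite). -/
noncomputable def relsizeElem (K : Subgroup G) (g : G) : ℝ :=
  (((nu K g).toNat : ℝ))⁻¹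

/-- The relative size of a finite set. -/
noncomputable def relsizeFinset (K : Subgroup G) (S : Finset G) : ℝ :=
  ∑ g ∈ S, relsizeElem K g

/-- The relative size of a normal subgroup `M`, finitely generated as a normal subgroup. -/
noncomputable def relsizeSubgroup (K M : Subgroup G) : ℝ :=
  sInf {x : ℝ | ∃ S : Finset G, Subgroup.normalClosure (S : Set G) = M ∧
    x = relsizeFinset K S}

/-- `a` is a minimal root of `g` in `G` with respect to `K`. -/
def IsMinimalRoot (K : Subgroup G) (g a : G) : Prop :=
  (g ∈ K ∧ (∃ n : ℤ, a ^ n = g) ∧ ((orderIn K a : ℕ∞) = nu K g)) ∨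
  (g ∉ K ∧ ∃ m : ℕ, (m : ℕ∞) = nu K g ∧ a ^ m = g)


/-! ### Path sums on the Cayley graph of a finite quotient -/

section Cocycle

variable {Q : Type*} [Group Q] {n : ℕ} (π : FreeGroup (Fin n) →* Q)

/-- The action of the free group on the skew product `Q × ℚ` in which the generator `xᵢ` sends
`(q, t)` to `(π xᵢ * q, t + w (q, i))`. Here `w` is a weight on the edges of the Cayley graph
of `Q` with respect to the images of the generators. -/
noncomputable def skew (w : Q × Fin n → ℚ) : FreeGroup (Fin n) →* Equiv.Perm (Q × ℚ) :=
  FreeGroup.lift fun i =>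
    { toFun := fun p => (π (FreeGroup.of i) * p.1, p.2 + w (p.1, i))
      invFun := fun p => ((π (FreeGroup.of i))⁻¹ * p.1,
        p.2 - w ((π (FreeGroup.of i))⁻¹ * p.1, i))
      left_inv := fun p => by ext <;> simp
      right_inv := fun p => by ext <;> simp }

/-- The total weight of the path labelled by the word `g`, read from right to left, that
starts at the vertex `q` of the Cayley graph. -/
noncomputable def pathSum (w : Q × Fin n → ℚ) (g : FreeGroup (Fin n)) (q : Q) : ℚ :=
  (skew π w g (q, 0)).2

theorem skew_apply (w : Q × Fin n → ℚ) (g : FreeGroup (Fin n)) :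
    ∀ (q : Q) (t : ℚ), skew π w g (q, t) = (π g * q, t + pathSum π w g q) := by
  induction g using FreeGroup.induction_on with
  | C1 => intro q t; simp [pathSum]
  | of i => intro q t; simp [pathSum, skew]
  | inv_of i _ =>
    intro q t
    simp only [pathSum, skew, map_inv, FreeGroup.lift_apply_of]
    ext
    · rfl
    · change t - _ = t + (0 - _)
      ring
  | mul g h ihg ihh =>
    intro q t
    have key : ∀ t, skew π w (g * h) (q, t)
        = (π g * (π h * q), t + pathSum π w h q + pathSum π w g (π h * q)) := by
      intro t
      rw [map_mul, Equiv.Perm.mul_apply, ihh, ihg]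
    have h0 : pathSum π w (g * h) q = pathSum π w h q + pathSum π w g (π h * q) := by
      rw [pathSum, key]; simp
    rw [key, h0, map_mul, mul_assoc, add_assoc]

theorem pathSum_mul (w : Q × Fin n → ℚ) (g h : FreeGroup (Fin n)) (q : Q) :
    pathSum π w (g * h) q = pathSum π w g (π h * q) + pathSum π w h q := by
  have h1 := skew_apply π w (g * h) q 0
  rw [map_mul, Equiv.Perm.mul_apply, skew_apply, skew_apply] at h1
  have h2 := congrArg Prod.snd h1
  simp only at h2
  linarith

theorem pathSum_of (w : Q × Fin n → ℚ) (i : Fin n) (q : Q) :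
    pathSum π w (FreeGroup.of i) q = w (q, i) := by
  simp [pathSum, skew]

/-- A crossed homomorphism on a free group is determined by its values on the generators. -/
theorem eq_pathSum (w : Q × Fin n → ℚ) (E : FreeGroup (Fin n) → Q → ℚ)
    (hmul : ∀ g h q, E (g * h) q = E g (π h * q) + E h q)
    (hof : ∀ i q, E (FreeGroup.of i) q = w (q, i)) (g : FreeGroup (Fin n)) :
    ∀ q, E g q = pathSum π w g q := by
  have one : ∀ q, E 1 q = 0 := fun q => by
    have := hmul 1 1 q
    simp only [mul_one, map_one, one_mul] at this
    linarith
  have one' : ∀ q, pathSum π w 1 q = 0 := fun q => by simp [pathSum]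
  induction g using FreeGroup.induction_on with
  | C1 => intro q; rw [one, one']
  | of i => intro q; rw [hof, pathSum_of]
  | inv_of i ih =>
    intro q
    have h1 := hmul (FreeGroup.of i) (FreeGroup.of i)⁻¹ q
    have h2 := pathSum_mul π w (FreeGroup.of i) (FreeGroup.of i)⁻¹ q
    rw [mul_inv_cancel] at h1 h2
    rw [one] at h1
    rw [one'] at h2
    have := ih (π (FreeGroup.of i)⁻¹ * q)
    linarith
  | mul g h ihg ihh => intro q; rw [hmul, pathSum_mul, ihg, ihh]

/-- `pathSum` as a linear function of the weight. -/
noncomputable def pathSumL (g : FreeGroup (Fin n)) (q : Q) : (Q × Fin n → ℚ) →ₗ[ℚ] ℚ where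
  toFun w := pathSum π w g q
  map_add' w w' := by
    refine (eq_pathSum π (w + w') (fun g q => pathSum π w g q + pathSum π w' g q) ?_ ?_ g q).symm
    · intro g h q; simp only [pathSum_mul]; ring
    · intro i q; simp only [pathSum_of]; rfl
  map_smul' c w := by
    refine (eq_pathSum π (c • w) (fun g q => c • pathSum π w g q) ?_ ?_ g q).symm
    · intro g h q; simp only [pathSum_mul, smul_add]
    · intro i q; simp only [pathSum_of]; rfl

/-- Closed paths labelled by `u ^ m`, based at points of one orbit of `u`, have the same weight:
they are cyclic rotations of each other. -/
theorem pathSum_zpowers (w : Q × Fin n → ℚ) (u : FreeGroup (Fin n)) (m : ℕ)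
    (hu : π u ^ m = 1) {z : Q} (hz : z ∈ Subgroup.zpowers (π u)) :
    ∀ q, pathSum π w (u ^ m) (z * q) = pathSum π w (u ^ m) q := by
  have step : ∀ q, pathSum π w (u ^ m) (π u * q) = pathSum π w (u ^ m) q := fun q => by
    have h1 := pathSum_mul π w (u ^ m) u q
    have h2 := pathSum_mul π w u (u ^ m) q
    rw [map_pow, hu, one_mul] at h2
    rw [← pow_succ] at h1
    rw [← pow_succ'] at h2
    linarith
  rw [Subgroup.zpowers_eq_closure] at hz
  induction hz using Subgroup.closure_induction with
  | mem z hz => rw [Set.mem_singleton_iff.mp hz]; exact step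
  | one => intro q; rw [one_mul]
  | mul y z _ _ hy hz => intro q; rw [mul_assoc, hy, hz]
  | inv z _ hz => intro q; rw [← hz, mul_inv_cancel_left]

/-- The coboundary map, from functions on the vertices to functions on the edges. -/
noncomputable def coboundary : (Q → ℚ) →ₗ[ℚ] (Q × Fin n → ℚ) where
  toFun p e := p (π (FreeGroup.of e.2) * e.1) - p e.1
  map_add' p p' := by ext e; simp; ring
  map_smul' c p := by ext e; simp; ring

theorem finrank_coboundary [Finite Q] :
    Module.finrank ℚ (LinearMap.range (coboundary π)) + 1 ≤ Nat.card Q := by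
  have : Fintype Q := Fintype.ofFinite Q
  have h := LinearMap.finrank_range_add_finrank_ker (coboundary π)
  rw [Module.finrank_fintype_fun_eq_card, ← Nat.card_eq_fintype_card] at h
  have hk : 0 < Module.finrank ℚ (LinearMap.ker (coboundary π)) := by
    rw [Module.finrank_pos_iff_exists_ne_zero]
    refine ⟨⟨fun _ => 1, ?_⟩, ?_⟩
    · ext e; simp [coboundary]
    · intro h
      have := congrFun (congrArg Subtype.val h) 1
      simp at this
  omega

/-- A weight that vanishes on all closed paths through the base point has a potential. -/
theorem mem_range_coboundary (hπ : Function.Surjective π) (w : Q × Fin n → ℚ)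
    (hw : ∀ g, π g = 1 → pathSum π w g 1 = 0) : w ∈ LinearMap.range (coboundary π) := by
  choose s hs using hπ
  have key : ∀ g, pathSum π w g 1 = pathSum π w (s (π g)) 1 := fun g => by
    have h1 : π ((s (π g))⁻¹ * g) = 1 := by simp [hs]
    have h := pathSum_mul π w (s (π g)) ((s (π g))⁻¹ * g) 1
    rw [hw _ h1, h1, mul_inv_cancel_left] at h
    simpa using h
  refine ⟨fun q => pathSum π w (s q) 1, ?_⟩
  ext ⟨q, i⟩
  have h := pathSum_mul π w (FreeGroup.of i) (s q) 1
  rw [key, map_mul, hs, mul_one, pathSum_of] at h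
  simp only [coboundary, LinearMap.coe_mk, AddHom.coe_mk]
  linarith

end Cocycle

/-! ### Homomorphisms to `ℚ` and the first Betti number -/

/-- `H` maps onto a lattice of rank at least `d` as soon as it has `d` linearly independent
homomorphisms to `ℚ`. -/
theorem finrank_le_firstBetti {H : Type*} [Group H] [Group.FG H] (S : Submodule ℚ (H → ℚ))
    [FiniteDimensional ℚ S] (hS : ∀ f ∈ S, ∀ a b, f (a * b) = f a + f b) :
    Module.finrank ℚ S ≤ firstBetti H := by
  -- Without an upper bound `firstBetti` would take the junk value `0`.
  have hbdd : BddAbove {n : ℕ | ∃ f : H →* Multiplicative (Fin n → ℤ),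
      Function.Surjective f} := by
    obtain ⟨T, hT⟩ := Group.FG.out (G := H)
    refine ⟨T.card, ?_⟩
    rintro k ⟨f, hf⟩
    have h1 : Submodule.span ℤ
        ((T.image fun h => Multiplicative.toAdd (f h) : Finset (Fin k → ℤ)) : Set (Fin k → ℤ))
        = ⊤ := by
      rw [eq_top_iff]
      rintro v -
      obtain ⟨h, hh⟩ := hf (Multiplicative.ofAdd v)
      have hv : v = Multiplicative.toAdd (f h) := by rw [hh]; rfl
      rw [hv]
      clear hv hh
      have hmem : h ∈ Subgroup.closure (T : Set H) := by rw [hT]; trivial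
      induction hmem using Subgroup.closure_induction with
      | mem x hx =>
        exact Submodule.subset_span (by simpa using ⟨x, hx, rfl⟩)
      | one => simp
      | mul x y _ _ hx hy =>
        rw [map_mul, toAdd_mul]
        exact add_mem hx hy
      | inv x _ hx =>
        rw [map_inv, toAdd_inv]
        exact neg_mem hx
    have h2 := finrank_span_finset_le_card (R := ℤ)
      (T.image fun h => Multiplicative.toAdd (f h) : Finset (Fin k → ℤ))
    rw [Set.finrank, h1, finrank_top, Module.finrank_fin_fun] at h2
    exact h2.trans Finset.card_image_le
  let e : Additive H →+ (S →ₗ[ℚ] ℚ) :=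
    AddMonoidHom.mk' (fun h => (LinearMap.proj h.toMul).comp S.subtype) (by
      intro a b
      ext f
      exact hS f.1 f.2 a.toMul b.toMul)
  let M : Submodule ℤ (S →ₗ[ℚ] ℚ) := AddSubgroup.toIntSubmodule e.range
  have hM : Module.Finite ℤ M := by
    have : AddGroup.FG e.range := AddGroup.fg_range e
    exact Module.Finite.iff_addGroup_fg.mpr this
  have hfree : Module.Free ℤ M := inferInstance
  let B := Module.finBasis ℤ M
  let E : H →* Multiplicative M := AddMonoidHom.toMultiplicativeRight (e.rangeRestrict)
  have hE : Function.Surjective E := e.rangeRestrict_surjective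
  have hmem : Module.finrank ℤ M ∈ {n : ℕ | ∃ f : H →* Multiplicative (Fin n → ℤ),
      Function.Surjective f} :=
    ⟨(AddMonoidHom.toMultiplicative B.equivFun.toLinearMap.toAddMonoidHom).comp E,
      B.equivFun.surjective.comp hE⟩
  refine le_trans ?_ (le_csSup hbdd hmem)
  -- The values at preimages of a basis of the lattice `M` determine an element of `S`.
  choose x hx using fun i => (B i).2
  let L : S →ₗ[ℚ] (Fin (Module.finrank ℤ M) → ℚ) :=
    LinearMap.pi fun i => (LinearMap.proj (x i).toMul).comp S.subtype
  have hL : Function.Injective L := by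
    rw [injective_iff_map_eq_zero]
    intro f hf
    ext h
    have h1 : ∀ i, (B i : S →ₗ[ℚ] ℚ) f = 0 := fun i => by
      rw [← hx i]; exact congrFun hf i
    have h2 := congrArg (fun y : M => (y : S →ₗ[ℚ] ℚ) f) (B.sum_repr (E h).toAdd)
    simp only [Submodule.coe_sum, Submodule.coe_smul, LinearMap.sum_apply, LinearMap.smul_apply,
      h1, smul_zero, Finset.sum_const_zero] at h2
    exact h2.symm
  simpa using LinearMap.finrank_le_finrank_of_injective hL

/-! ### The dimension count -/

/-- Allcock: if `H` is a normal subgroup of finite index `N` such that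
`φ(u_j)^k ∉ H` for `k = 1, …, m_j − 1`, then the rank of the abelianisation of `H` is
at least `1 + N(n − 1 − Σ 1/m_j)`. -/
theorem statement8 {G : Type*} [Group G] (n r : ℕ) (u : Fin r → FreeGroup (Fin n))
    (m : Fin r → ℕ) (hm : ∀ j, 1 ≤ m j) (φ : FreeGroup (Fin n) →* G)
    (hsurj : Function.Surjective φ)
    (hker : φ.ker = Subgroup.normalClosure (Set.range fun j => u j ^ m j))
    (H : Subgroup G) (hHn : H.Normal) (hH : H.index ≠ 0)
    (hpow : ∀ j : Fin r, ∀ k : ℕ, 1 ≤ k → k ≤ m j - 1 → φ (u j) ^ k ∉ H) :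
    1 + (H.index : ℝ) * ((n : ℝ) - 1 - ∑ j, ((m j : ℝ))⁻¹) ≤ (firstBetti H : ℝ) := by
  have hfin : H.FiniteIndex := ⟨hH⟩
  let π : FreeGroup (Fin n) →* G ⧸ H := (QuotientGroup.mk' H).comp φ
  have hπ : Function.Surjective π := (QuotientGroup.mk'_surjective H).comp hsurj
  have hπ1 : ∀ g, π g = 1 ↔ φ g ∈ H := fun g => QuotientGroup.eq_one_iff _
  have hFG : Group.FG H := by
    have : Group.FG G := Group.fg_of_surjective hsurj
    infer_instance
  have : Fintype (G ⧸ H) := Fintype.ofFinite _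
  have hcard : Nat.card (G ⧸ H) = H.index := rfl
  have hrel : ∀ j, π (u j) ^ m j = 1 := fun j => by
    rw [← map_pow, hπ1]
    have : u j ^ m j ∈ φ.ker := by
      rw [hker]; exact Subgroup.subset_normalClosure ⟨j, rfl⟩
    rw [MonoidHom.mem_ker.mp this]; exact one_mem H
  have hord : ∀ j, orderOf (π (u j)) = m j := fun j => by
    rw [orderOf_eq_iff (hm j)]
    refine ⟨hrel j, fun k hk hk0 h => ?_⟩
    rw [← map_pow, hπ1, map_pow] at h
    exact hpow j k hk0 (by omega) h
  -- One linear condition for each relator `j` and each orbit of `u j` on the vertices.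
  let I := Σ j : Fin r, (G ⧸ H) ⧸ Subgroup.zpowers (π (u j))
  have : Fintype I := Fintype.ofFinite _
  let R : ((G ⧸ H) × Fin n → ℚ) →ₗ[ℚ] (I → ℚ) :=
    LinearMap.pi fun c => pathSumL π (u c.1 ^ m c.1) (Quotient.out c.2)⁻¹
  have hI : (Fintype.card I : ℝ) = H.index * ∑ j, ((m j : ℝ))⁻¹ := by
    rw [← Nat.card_eq_fintype_card, Nat.card_sigma, Finset.mul_sum, Nat.cast_sum]
    refine Finset.sum_congr rfl fun j _ => ?_
    have h := Subgroup.card_eq_card_quotient_mul_card_subgroup (Subgroup.zpowers (π (u j)))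
    rw [Nat.card_zpowers, hord, hcard] at h
    have hmj : (m j : ℝ) ≠ 0 := by have := hm j; positivity
    rw [h]; push_cast; field_simp
  have hW : ∀ w ∈ LinearMap.ker R, ∀ g ∈ φ.ker, skew π w g = 1 := by
    intro w hw
    have : φ.ker ≤ (skew π w).ker := by
      rw [hker]
      refine Subgroup.normalClosure_le_normal ?_
      rintro _ ⟨j, rfl⟩
      refine MonoidHom.mem_ker.mpr (Equiv.ext fun ⟨q, t⟩ => ?_)
      have h0 : pathSum π w (u j ^ m j) q = 0 := by
        obtain ⟨z, hz⟩ := QuotientGroup.mk_out_eq_mul (Subgroup.zpowers (π (u j))) q⁻¹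
        have h1 : (Quotient.out ((q⁻¹ : G ⧸ H) : (G ⧸ H) ⧸ Subgroup.zpowers (π (u j))))⁻¹
            = (z : G ⧸ H)⁻¹ * q := by
          have hz' := congrArg (·⁻¹) hz
          simpa using hz'
        have h2 : pathSum π w (u j ^ m j)
            (Quotient.out ((q⁻¹ : G ⧸ H) : (G ⧸ H) ⧸ Subgroup.zpowers (π (u j))))⁻¹ = 0 :=
          congrFun (LinearMap.mem_ker.mp hw) ⟨j, _⟩
        rwa [h1, pathSum_zpowers π w (u j) (m j) (hrel j) (inv_mem z.2)] at h2
      rw [skew_apply, h0, map_pow, hrel]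
      simp
    exact fun g hg => this hg
  have hwd : ∀ w ∈ LinearMap.ker R, ∀ g g', φ g = φ g' → pathSum π w g = pathSum π w g' := by
    intro w hw g g' h
    have h1 := hW w hw (g⁻¹ * g') (by rw [MonoidHom.mem_ker, map_mul, map_inv, h]; simp)
    rw [map_mul, map_inv, inv_mul_eq_one] at h1
    funext q
    rw [pathSum, pathSum, h1]
  choose s hs using hsurj
  let L : LinearMap.ker R →ₗ[ℚ] (H → ℚ) :=
    (LinearMap.pi fun h : H => pathSumL π (s h) 1).comp (LinearMap.ker R).subtype
  have hadd : ∀ f ∈ LinearMap.range L, ∀ a b, f (a * b) = f a + f b := by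
    rintro _ ⟨w, rfl⟩ a b
    change pathSum π w.1 (s (a * b : H)) 1 = pathSum π w.1 (s a) 1 + pathSum π w.1 (s b) 1
    rw [hwd w.1 w.2 (s (a * b : H)) (s a * s b) (by simp [hs]), pathSum_mul,
      (hπ1 (s b)).mpr (by rw [hs]; exact b.2), one_mul]
  have hbetti := finrank_le_firstBetti (LinearMap.range L) hadd
  have hLk : Module.finrank ℚ (LinearMap.ker L)
      ≤ Module.finrank ℚ (LinearMap.range (coboundary (n := n) π)) := by
    rw [← Submodule.finrank_map_subtype_eq]
    refine Submodule.finrank_mono ?_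
    rintro _ ⟨w, hw, rfl⟩
    refine mem_range_coboundary π hπ _ fun g hg => ?_
    have h1 : pathSum π w.1 (s (φ g)) 1 = 0 :=
      congrFun (LinearMap.mem_ker.mp hw) ⟨φ g, (hπ1 g).mp hg⟩
    rwa [hwd w.1 w.2 _ g (hs _)] at h1
  have hcob := finrank_coboundary (n := n) π
  have hL := LinearMap.finrank_range_add_finrank_ker L
  have hR := LinearMap.finrank_range_add_finrank_ker R
  have hRr : Module.finrank ℚ (LinearMap.range R) ≤ Fintype.card I := by
    simpa using Submodule.finrank_le (LinearMap.range R)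
  rw [Module.finrank_fintype_fun_eq_card, Fintype.card_prod, Fintype.card_fin,
    ← Nat.card_eq_fintype_card, hcard] at hR
  rw [hcard] at hcob
  have hfinal : H.index * n + 1 ≤ firstBetti H + Fintype.card I + H.index := by omega
  have hreal : (H.index : ℝ) * n + 1 ≤ firstBetti H + Fintype.card I + H.index := by
    exact_mod_cast hfinal
  rw [hI] at hreal
  linarith

end ResDef
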